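/- Assume σ > 0 and that ψ attains its global maximum over [0,t) × ℝⁿ × ℝⁿ × I at a point (τ₀, x₀, y₀, i₀). Then τ₀ > 0. -/

import Mathlib

open Set

/-
Suppose `τ₀ = 0`. Off the strip `Δ^α` the quadratic penalty `(α/2)|x - y|²` is at least `2R`, so
the penalized initial difference is nonpositive there, and `ψ(0, x₀, y₀, i₀) ≤ σ₀` whether or not
`(x₀, y₀)` lies in the strip. On the other hand the term `δστ/t` in `ψ` costs at most `δσ`, so
maximality gives `σ + σ₀ ≤ ψ(0, x₀, y₀, i₀) + δσ ≤ σ₀ + δσ`, which is impossible for `δ < 1`.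
-/

lemma mul_div_le_max_zero {c τ t : ℝ} (hτ : τ ∈ Ico 0 t) : c * τ / t ≤ max c 0 := by
  have ht : 0 < t := hτ.1.trans_lt hτ.2
  rw [div_le_iff₀ ht]
  calc c * τ ≤ max c 0 * τ := mul_le_mul_of_nonneg_right (le_max_left c 0) hτ.1
    _ ≤ max c 0 * t := mul_le_mul_of_nonneg_left hτ.2.le (le_max_right c 0)

section

variable {E ι : Type*}

/-- The supremum of `|u_i(τ, x)|` over the time interval `[0, T]`; the constant `R` is the maximum
of the values for `u¹` and `u²`. The value is `0` if `u` is unbounded. -/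
noncomputable def supAbs (T : ℝ) (u : ℝ → E → ι → ℝ) : ℝ :=
  sSup {a : ℝ | ∃ i τ x, τ ∈ Icc 0 T ∧ a = |u τ x i|}

section SupAbs

variable {T : ℝ} {u v : ℝ → E → ι → ℝ}

lemma supAbs_nonneg : 0 ≤ supAbs T u := by
  refine Real.sSup_nonneg ?_
  rintro _ ⟨i, τ, x, -, rfl⟩
  exact abs_nonneg _

lemma abs_le_supAbs (hu : BddAbove {a : ℝ | ∃ i τ x, τ ∈ Icc 0 T ∧ a = |u τ x i|})
    {τ : ℝ} (hτ : τ ∈ Icc 0 T) (x : E) (i : ι) : |u τ x i| ≤ supAbs T u :=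
  le_csSup hu ⟨i, τ, x, hτ, rfl⟩

lemma sub_le_two_mul_max_supAbs
    (hu : BddAbove {a : ℝ | ∃ i τ x, τ ∈ Icc 0 T ∧ a = |u τ x i|})
    (hv : BddAbove {a : ℝ | ∃ i τ x, τ ∈ Icc 0 T ∧ a = |v τ x i|})
    {τ : ℝ} (hτ : τ ∈ Icc 0 T) (x y : E) (i : ι) :
    u τ x i - v τ y i ≤ 2 * max (supAbs T u) (supAbs T v) := by
  have hux : u τ x i ≤ max (supAbs T u) (supAbs T v) :=
    (le_abs_self _).trans ((abs_le_supAbs hu hτ x i).trans (le_max_left _ _))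
  have hvy : -v τ y i ≤ max (supAbs T u) (supAbs T v) :=
    (neg_le_abs _).trans ((abs_le_supAbs hv hτ y i).trans (le_max_right _ _))
  linarith

end SupAbs

/-- The supremum over `[0, t) × Δ` of the difference of `u` and `v` penalized by `φ`, which is
`σ + σ₀` when `φ` is the doubling penalty and `Δ` the strip `Δ^α`. -/
noncomputable def penalizedSup (t : ℝ) (Δ : Set (E × E)) (φ : ℝ → E → E → ℝ)
    (u v : ℝ → E → ι → ℝ) : ℝ :=
  sSup {a : ℝ | ∃ (τ : ℝ) (i : ι) (x y : E), τ ∈ Ico 0 t ∧ (x, y) ∈ Δ ∧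
    a = u τ x i - v τ y i - φ τ x y}

/-- The function `ψ`, with a general penalty `φ` and with `c` in the place of `δσ`. -/
noncomputable def tiltedDifference (c t : ℝ) (φ : ℝ → E → E → ℝ) (u v : ℝ → E → ι → ℝ)
    (τ : ℝ) (x y : E) (i : ι) : ℝ :=
  u τ x i - v τ y i - c * τ / t - φ τ x y

lemma penalizedSup_le_tiltedDifference_add {c t : ℝ} {Δ : Set (E × E)} {φ : ℝ → E → E → ℝ}
    {u v : ℝ → E → ι → ℝ} {τ₀ : ℝ} {x₀ y₀ : E} {i₀ : ι} (hτ₀ : τ₀ ∈ Ico 0 t) (hΔ : Δ.Nonempty)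
    (hmax : ∀ τ x y i, τ ∈ Ico 0 t →
      tiltedDifference c t φ u v τ x y i ≤ tiltedDifference c t φ u v τ₀ x₀ y₀ i₀) :
    penalizedSup t Δ φ u v ≤ tiltedDifference c t φ u v τ₀ x₀ y₀ i₀ + max c 0 := by
  obtain ⟨⟨x, y⟩, hxy⟩ := hΔ
  refine csSup_le ⟨_, τ₀, i₀, x, y, hτ₀, hxy, rfl⟩ ?_
  rintro _ ⟨τ, i, x, y, hτ, -, rfl⟩
  calc u τ x i - v τ y i - φ τ x y
      = tiltedDifference c t φ u v τ x y i + c * τ / t := by rw [tiltedDifference]; ring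
    _ ≤ _ := add_le_add (hmax τ x y i hτ) (mul_div_le_max_zero hτ)

variable [SeminormedAddCommGroup E]

variable (E) in
/-- The strip `Δ^α` around the diagonal, to which the suprema `σ₀` and `σ` are restricted. -/
def diagonalStrip (R α : ℝ) : Set (E × E) :=
  {p | ‖p.1 - p.2‖ ≤ 2 * √R / √α}

section DiagonalStrip

variable {R α : ℝ}

lemma diag_mem_diagonalStrip (x : E) : (x, x) ∈ diagonalStrip E R α := by
  simp only [diagonalStrip, mem_ofPred_eq, sub_self, norm_zero]
  positivity

lemma two_mul_le_of_notMem_diagonalStrip (hR : 0 ≤ R) (hα : 0 < α) {x y : E}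
    (hxy : (x, y) ∉ diagonalStrip E R α) : 2 * R ≤ α / 2 * ‖x - y‖ ^ 2 := by
  have hfar : 2 * √R / √α ≤ ‖x - y‖ := (not_le.mp hxy).le
  have hsq : (2 * √R / √α) ^ 2 ≤ ‖x - y‖ ^ 2 := pow_le_pow_left₀ (by positivity) hfar 2
  rw [div_pow, mul_pow, Real.sq_sqrt hR, Real.sq_sqrt hα.le, div_le_iff₀ hα] at hsq
  linarith

end DiagonalStrip

/-- The penalty `(α/2) e^{γτ} |x - y|² + (ε/2)(|x|² + |y|²) + ε/(t - τ)` of the doubling of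
variables. -/
noncomputable def doublingPenalty (α ε γ t τ : ℝ) (x y : E) : ℝ :=
  α / 2 * Real.exp (γ * τ) * ‖x - y‖ ^ 2 + ε / 2 * (‖x‖ ^ 2 + ‖y‖ ^ 2) + ε / (t - τ)

lemma half_mul_sq_le_doublingPenalty_zero {α ε γ t : ℝ} (hε : 0 ≤ ε) (ht : 0 ≤ t) (x y : E) :
    α / 2 * ‖x - y‖ ^ 2 ≤ doublingPenalty α ε γ t 0 x y := by
  have hloc : 0 ≤ ε / 2 * (‖x‖ ^ 2 + ‖y‖ ^ 2) := by positivity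
  have hbarrier : 0 ≤ ε / t := div_nonneg hε ht
  simp only [doublingPenalty, mul_zero, Real.exp_zero, mul_one, sub_zero]
  linarith

/-- The constant `σ₀`: the largest positive part over `Δ` of the penalized difference of the
initial data `u` and `v`. The value is `0` if that difference is unbounded above on `Δ`. -/
noncomputable def initialExcess (α : ℝ) (Δ : Set (E × E)) (u v : E → ι → ℝ) : ℝ :=
  sSup {a : ℝ | ∃ (i : ι) (x y : E),
    (x, y) ∈ Δ ∧ a = max (u x i - v y i - α / 2 * ‖x - y‖ ^ 2) 0}

section InitialExcess

variable {α : ℝ} {Δ : Set (E × E)} {u v : E → ι → ℝ}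

lemma initialExcess_nonneg : 0 ≤ initialExcess α Δ u v := by
  refine Real.sSup_nonneg ?_
  rintro _ ⟨i, x, y, -, rfl⟩
  exact le_max_right _ _

lemma penalized_le_initialExcess_of_mem {C : ℝ} (hα : 0 ≤ α)
    (huv : ∀ x y i, u x i - v y i ≤ C) {x y : E} (hxy : (x, y) ∈ Δ) (i : ι) :
    u x i - v y i - α / 2 * ‖x - y‖ ^ 2 ≤ initialExcess α Δ u v := by
  refine (le_max_left _ 0).trans (le_csSup ⟨max C 0, ?_⟩ ⟨i, x, y, hxy, rfl⟩)
  rintro _ ⟨j, x', y', -, rfl⟩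
  have hpen : 0 ≤ α / 2 * ‖x' - y'‖ ^ 2 := by positivity
  exact max_le_max_right 0 ((sub_le_self _ hpen).trans (huv x' y' j))

lemma penalized_le_initialExcess {R : ℝ} (hR : 0 ≤ R) (hα : 0 < α)
    (huv : ∀ x y i, u x i - v y i ≤ 2 * R) (x y : E) (i : ι) :
    u x i - v y i - α / 2 * ‖x - y‖ ^ 2 ≤ initialExcess α (diagonalStrip E R α) u v := by
  by_cases hxy : (x, y) ∈ diagonalStrip E R α
  · exact penalized_le_initialExcess_of_mem hα.le huv hxy i
  · have hnonpos : u x i - v y i - α / 2 * ‖x - y‖ ^ 2 ≤ 0 :=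
      sub_nonpos.mpr ((huv x y i).trans (two_mul_le_of_notMem_diagonalStrip hR hα hxy))
    exact hnonpos.trans initialExcess_nonneg

end InitialExcess

theorem stmt18_general {R α δ t σ : ℝ} {φ : ℝ → E → E → ℝ} {u v : ℝ → E → ι → ℝ}
    (hR : 0 ≤ R) (hα : 0 < α) (hδ : δ < 1)
    (huv : ∀ x y i, u 0 x i - v 0 y i ≤ 2 * R)
    (hφ : ∀ x y, α / 2 * ‖x - y‖ ^ 2 ≤ φ 0 x y)
    (hσ : σ = -initialExcess α (diagonalStrip E R α) (u 0) (v 0) +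
      penalizedSup t (diagonalStrip E R α) φ u v)
    (hσpos : 0 < σ) {τ₀ : ℝ} {x₀ y₀ : E} {i₀ : ι} (hτ₀ : τ₀ ∈ Ico 0 t)
    (hmax : ∀ τ x y i, τ ∈ Ico 0 t →
      tiltedDifference (δ * σ) t φ u v τ x y i ≤
        tiltedDifference (δ * σ) t φ u v τ₀ x₀ y₀ i₀) :
    0 < τ₀ := by
  refine hτ₀.1.lt_of_ne ?_
  rintro rfl
  have hsup := penalizedSup_le_tiltedDifference_add (Δ := diagonalStrip E R α) hτ₀
    ⟨(x₀, x₀), diag_mem_diagonalStrip x₀⟩ hmax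
  have hinit : tiltedDifference (δ * σ) t φ u v 0 x₀ y₀ i₀ ≤
      initialExcess α (diagonalStrip E R α) (u 0) (v 0) := by
    rw [tiltedDifference, mul_zero, zero_div, sub_zero]
    exact (sub_le_sub_left (hφ x₀ y₀) _).trans (penalized_le_initialExcess hR hα huv x₀ y₀ i₀)
  have htilt : max (δ * σ) 0 < σ := max_lt (mul_lt_of_lt_one_left hσpos hδ) hσpos
  linarith

end

/-- In the proof of the continuous dependence estimate: if `σ > 0`, then the
maximum point `(τ₀,x₀,y₀,i₀)` of `ψ` satisfies `τ₀ > 0`. -/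
theorem stmt18
    (n m : ℕ) (hn : 1 ≤ n) (hm : 1 ≤ m)
    (T t : ℝ) (hT : 0 < T) (ht : t ∈ Set.Ioc 0 T)
    (u1 u2 : ℝ → EuclideanSpace ℝ (Fin n) → Fin m → ℝ)
    (hbdd1 : BddAbove {v : ℝ | ∃ i τ x, τ ∈ Set.Icc 0 T ∧ v = |u1 τ x i|})
    (hbdd2 : BddAbove {v : ℝ | ∃ i τ x, τ ∈ Set.Icc 0 T ∧ v = |u2 τ x i|})
    (R : ℝ)
    (hR : R = max (sSup {v : ℝ | ∃ i τ x, τ ∈ Set.Icc 0 T ∧ v = |u1 τ x i|})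
                  (sSup {v : ℝ | ∃ i τ x, τ ∈ Set.Icc 0 T ∧ v = |u2 τ x i|}))
    (α ε γbar δ : ℝ) (hα : 0 < α) (hε : 0 < ε) (hγbar : 0 ≤ γbar)
    (hδ : δ ∈ Set.Ioo (0:ℝ) 1)
    (Δ : Set (EuclideanSpace ℝ (Fin n) × EuclideanSpace ℝ (Fin n)))
    (hΔ : Δ = {p | ‖p.1 - p.2‖ ≤ 2 * Real.sqrt R / Real.sqrt α})
    (σ₀ σ : ℝ)
    (hσ₀ : σ₀ = sSup {v : ℝ | ∃ (i : Fin m) (x y : EuclideanSpace ℝ (Fin n)),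
        (x, y) ∈ Δ ∧ v = max (u1 0 x i - u2 0 y i - α / 2 * ‖x - y‖ ^ 2) 0})
    (hσdef : σ = -σ₀ + sSup {v : ℝ | ∃ (τ : ℝ) (i : Fin m)
        (x y : EuclideanSpace ℝ (Fin n)), τ ∈ Set.Ico 0 t ∧ (x, y) ∈ Δ ∧
        v = u1 τ x i - u2 τ y i -
          (α / 2 * Real.exp (γbar * τ) * ‖x - y‖ ^ 2
            + ε / 2 * (‖x‖ ^ 2 + ‖y‖ ^ 2) + ε / (t - τ))})
    (hσpos : 0 < σ)
    (ψ : ℝ → EuclideanSpace ℝ (Fin n) → EuclideanSpace ℝ (Fin n) → Fin m → ℝ)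
    (hψ : ∀ τ x y i, ψ τ x y i =
      u1 τ x i - u2 τ y i - δ * σ * τ / t -
        (α / 2 * Real.exp (γbar * τ) * ‖x - y‖ ^ 2
          + ε / 2 * (‖x‖ ^ 2 + ‖y‖ ^ 2) + ε / (t - τ)))
    (τ₀ : ℝ) (x₀ y₀ : EuclideanSpace ℝ (Fin n)) (i₀ : Fin m)
    (hτ₀ : τ₀ ∈ Set.Ico 0 t)
    (hmax : ∀ τ x y i, τ ∈ Set.Ico 0 t → ψ τ x y i ≤ ψ τ₀ x₀ y₀ i₀) :
    0 < τ₀ := by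
  subst hR hΔ hσ₀
  exact stmt18_general (φ := doublingPenalty α ε γbar t) (le_max_of_le_left supAbs_nonneg) hα hδ.2
    (sub_le_two_mul_max_supAbs hbdd1 hbdd2 ⟨le_rfl, hT.le⟩)
    (half_mul_sq_le_doublingPenalty_zero hε.le ht.1.le) hσdef hσpos hτ₀
    (by simpa only [hψ, tiltedDifference, doublingPenalty] using hmax)
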